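/- Let K₁, K₂ ≥ 1 be real numbers, let p be a positive integer, and let k be a positive integer with k > p³K₁K₂/2. Suppose the step-size ratios satisfy 1/K₁ ≤ ω_j ≤ K₂ for all 1 ≤ j ≤ k. Then there exist a real r > 0 and nonnegative vectors δ, β satisfying the order-p conditions with parameter r; i.e., there exists a k-step explicit linear multistep formula of order p with positive SSP coefficient. -/

import Mathlib

/-- Cumulative step-size ratios: `OmegaSum ω j = ω 1 + ⋯ + ω j` (with `OmegaSum ω 0 = 0`). -/
noncomputable def OmegaSum (ω : ℕ → ℝ) (j : ℕ) : ℝ := ∑ i ∈ Finset.range j, ω (i + 1)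

/-- The order-`p` conditions with parameter `r` for a `k`-step explicit linear multistep
formula with coefficient vectors `δ`, `β` and step-size ratios `ω`:
`Σ_{j<k} (δ j + r β j) = 1` and, for `1 ≤ m ≤ p`,
`Σ_{j<k} ( Ω_j^m (δ j + r β j) + m Ω_j^{m-1} β j ) = Ω_k^m`. -/
def OrderCond (k p : ℕ) (ω : ℕ → ℝ) (r : ℝ) (δ β : ℕ → ℝ) : Prop :=
  (∑ j ∈ Finset.range k, (δ j + r * β j)) = 1 ∧
  ∀ m : ℕ, 1 ≤ m → m ≤ p →
    (∑ j ∈ Finset.range k,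
        ((OmegaSum ω j) ^ m * (δ j + r * β j)
          + (m : ℝ) * (OmegaSum ω j) ^ (m - 1) * β j))
      = (OmegaSum ω k) ^ m

/-!
By Farkas' lemma, weights `δ j + r * β j ≥ ε` and `β j ≥ 0` satisfying the order conditions exist
as soon as `ε * ∑ j < k, q(Ω j) ≤ q(Ω k)` for every polynomial `q` of degree at most `p` whose
value and derivative are nonnegative at `Ω 0, …, Ω (k - 1)`. For such `q`, the derivative has at
most `p - 1` roots and is nonnegative at the grid points, so it is negative somewhere on at most
`p / 2` of the cells `[Ω j, Ω (j + 1)]`. Let `D` be the oscillation of `q` on `[0, Ω k]`. By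
Markov's inequality `q` decreases by at most `K * p ^ 2 * D / Ω k` on each of these cells, where `K`
bounds the steps, hence by at most `θ * D` in total, with `θ = p ^ 3 * K / (2 * Ω k) < 1`. Therefore
`q(Ω k) ≥ q(0) + (1 - θ) * D`, while `q ≤ q(0) + D` everywhere, and `ε = (1 - θ) / k` works.
-/

open Polynomial Set

section Schur

lemma natDegree_comp_le_of_natDegree_le_one {R : Type*} [Semiring R] {P L : R[X]}
    (hL : L.natDegree ≤ 1) : (P.comp L).natDegree ≤ P.natDegree :=
  natDegree_comp_le.trans (mul_le_of_le_one_right' hL)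

lemma eval_one_derivative_le {P : ℝ[X]} {n : ℕ} {M : ℝ} (hn : P.natDegree ≤ n)
    (hP : ∀ x ∈ Icc (-1 : ℝ) 1, |P.eval x| ≤ M) :
    (derivative P).eval 1 ≤ (n : ℝ) ^ 2 * M := by
  obtain rfl | hM : 0 = M ∨ 0 < M := ((abs_nonneg _).trans (hP 1 (by simp))).eq_or_lt
  · have hP0 : P = 0 := P.eq_zero_of_infinite_isRoot <|
      (Icc_infinite (by norm_num : (-1 : ℝ) < 1)).mono fun x hx ↦
        abs_nonpos_iff.mp (hP x hx)
    simp [hP0]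
  · have hdeg : (C M⁻¹ * P).degree ≤ n :=
      natDegree_le_iff_degree_le.mp ((natDegree_C_mul_le _ _).trans hn)
    have hbound : ∀ x ∈ Icc (-1 : ℝ) 1, |(C M⁻¹ * P).eval x| ≤ 1 := fun x hx ↦ by
      rw [eval_C_mul, abs_mul, abs_of_pos (inv_pos.mpr hM), inv_mul_le_one₀ hM]
      exact hP x hx
    have h := Chebyshev.eval_iterate_derivative_le_of_forall_abs_le_one (k := 1) le_rfl hdeg hbound
    rwa [Function.iterate_one, Chebyshev.derivative_T_eval_one, derivative_C_mul, eval_C_mul,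
      inv_mul_le_iff₀ hM, mul_comm, Int.cast_natCast] at h

lemma abs_eval_one_le_of_abs_eval_mul_sqrt_le {Q : ℝ[X]} {M : ℝ}
    (hQ : ∀ x ∈ Icc (-1 : ℝ) 1, |Q.eval x| * √(1 - x ^ 2) ≤ M) :
    |Q.eval 1| ≤ (Q.natDegree + 1) * M := by
  have hM : 0 ≤ M := by simpa using hQ 1 (by simp)
  -- Since `P'(1) = 4 * Q(1) ^ 2`, the bound on `P'` at the endpoint gives one on `Q`.
  set P : ℝ[X] := C (M ^ 2) - C 2 * ((1 - X ^ 2) * Q ^ 2) with hPdef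
  have hdeg : P.natDegree ≤ 2 * (Q.natDegree + 1) := by
    rw [hPdef]
    compute_degree
    omega
  have hbound : ∀ x ∈ Icc (-1 : ℝ) 1, |P.eval x| ≤ M ^ 2 := fun x hx ↦ by
    have hx0 : 0 ≤ 1 - x ^ 2 := by nlinarith [hx.1, hx.2]
    have hsq : (1 - x ^ 2) * Q.eval x ^ 2 ≤ M ^ 2 := by
      calc (1 - x ^ 2) * Q.eval x ^ 2 = (|Q.eval x| * √(1 - x ^ 2)) ^ 2 := by
            rw [mul_pow, sq_abs, Real.sq_sqrt hx0, mul_comm]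
        _ ≤ M ^ 2 := by gcongr; exact hQ x hx
    have hnonneg : 0 ≤ (1 - x ^ 2) * Q.eval x ^ 2 := by positivity
    simp only [hPdef, eval_sub, eval_mul, eval_C, eval_one, eval_pow, eval_X]
    rw [abs_le]
    constructor <;> linarith
  have hderiv : (derivative P).eval 1 = 4 * Q.eval 1 ^ 2 := by
    simp only [hPdef, derivative_sub, derivative_C, derivative_mul, derivative_one,
      derivative_X_pow_succ, eval_sub, eval_add, eval_mul, eval_pow, eval_C, eval_one, eval_X,
      eval_zero]
    ring
  have h := eval_one_derivative_le hdeg hbound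
  rw [hderiv] at h
  push_cast at h
  refine abs_le_of_sq_le_sq ?_ (by positivity)
  linarith

lemma abs_eval_le_of_abs_eval_mul_sqrt_le {Q : ℝ[X]} {M x : ℝ}
    (hQ : ∀ x ∈ Icc (-1 : ℝ) 1, |Q.eval x| * √(1 - x ^ 2) ≤ M) (hx : x ∈ Icc (-1 : ℝ) 1) :
    |Q.eval x| ≤ (Q.natDegree + 1) * M := by
  have hx2 : x ^ 2 ≤ 1 := by nlinarith [hx.1, hx.2]
  -- The weight only grows when `Q` is replaced by its dilation `y ↦ Q(x * y)`.
  have hdilated : ∀ y ∈ Icc (-1 : ℝ) 1, |(Q.comp (C x * X)).eval y| * √(1 - y ^ 2) ≤ M := by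
    intro y hy
    have hy2 : y ^ 2 ≤ 1 := by nlinarith [hy.1, hy.2]
    have hxy : (x * y) ^ 2 ≤ y ^ 2 := by nlinarith [sq_nonneg y]
    have hxy1 : x * y ∈ Icc (-1 : ℝ) 1 :=
      abs_le.mp ((sq_le_one_iff_abs_le_one _).mp (hxy.trans hy2))
    calc |(Q.comp (C x * X)).eval y| * √(1 - y ^ 2) ≤ |Q.eval (x * y)| * √(1 - (x * y) ^ 2) := by
          simp only [eval_comp, eval_mul, eval_C, eval_X]
          gcongr
      _ ≤ M := hQ _ hxy1
  have hM : 0 ≤ M := by simpa using hQ 1 (by simp)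
  have hdeg : (Q.comp (C x * X)).natDegree ≤ Q.natDegree :=
    natDegree_comp_le_of_natDegree_le_one ((natDegree_C_mul_le x X).trans natDegree_X_le)
  calc |Q.eval x| = |(Q.comp (C x * X)).eval 1| := by simp
    _ ≤ ((Q.comp (C x * X)).natDegree + 1) * M := abs_eval_one_le_of_abs_eval_mul_sqrt_le hdilated
    _ ≤ (Q.natDegree + 1) * M := by gcongr

end Schur

section BernsteinMarkov

/-- The polynomial `B` such that `P(a * x + b * s) - P(a * x - b * s) = 2 * s * B(x)` on the circle
`s ^ 2 = 1 - x ^ 2`: it collects the odd terms of the Taylor expansion of `P` at `a * x`, with each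
`s ^ 2` replaced by `1 - X ^ 2`. It transfers a bound on `P` to a bound on `P'`. -/
noncomputable def rotationOddPart (P : ℝ[X]) (a b : ℝ) : ℝ[X] :=
  ∑ k ∈ Finset.range (P.natDegree + 1) with Odd k,
    C (b ^ k) * (hasseDeriv k P).comp (C a * X) * (1 - X ^ 2) ^ (k / 2)

lemma natDegree_rotationOddPart_le (P : ℝ[X]) (a b : ℝ) :
    (rotationOddPart P a b).natDegree ≤ P.natDegree - 1 := by
  refine natDegree_sum_le_of_forall_le _ _ fun k hk ↦ ?_
  obtain ⟨hkn, i, rfl⟩ := Finset.mem_filter.mp hk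
  rw [Finset.mem_range] at hkn
  have hcomp : ((hasseDeriv (2 * i + 1) P).comp (C a * X)).natDegree ≤ P.natDegree - (2 * i + 1) :=
    (natDegree_comp_le_of_natDegree_le_one
      ((natDegree_C_mul_le a X).trans natDegree_X_le)).trans (natDegree_hasseDeriv_le P _)
  have hpow : ((1 - X ^ 2 : ℝ[X]) ^ ((2 * i + 1) / 2)).natDegree ≤ (2 * i + 1) / 2 * 2 :=
    natDegree_pow_le_of_le _ (by compute_degree)
  refine (natDegree_mul_le_of_le ((natDegree_C_mul_le _ _).trans hcomp) hpow).trans ?_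
  omega

lemma eval_one_rotationOddPart (P : ℝ[X]) (a b : ℝ) :
    (rotationOddPart P a b).eval 1 = b * (derivative P).eval a := by
  rw [rotationOddPart, eval_finsetSum, Finset.sum_eq_single 1]
  · simp
  · rintro k hk hk1
    obtain ⟨-, i, rfl⟩ := Finset.mem_filter.mp hk
    have hi : (2 * i + 1) / 2 ≠ 0 := by omega
    simp [hi]
  · intro h1
    have h0 : P.natDegree = 0 := by simpa using h1
    simp [derivative_of_natDegree_zero h0]

lemma eval_add_sub_eval_sub_eq_rotationOddPart (P : ℝ[X]) (a b : ℝ) {x s : ℝ}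
    (hs : s ^ 2 = 1 - x ^ 2) :
    P.eval (a * x + b * s) - P.eval (a * x - b * s) = 2 * s * (rotationOddPart P a b).eval x := by
  have htaylor : ∀ u : ℝ, P.eval (a * x + u) =
      ∑ k ∈ Finset.range (P.natDegree + 1), (hasseDeriv k P).eval (a * x) * u ^ k := fun u ↦ by
    rw [add_comm, ← taylor_eval, eval_eq_sum_range, natDegree_taylor]
    simp only [taylor_coeff]
  rw [sub_eq_add_neg (a * x), htaylor, htaylor, ← Finset.sum_sub_distrib, rotationOddPart,
    eval_finsetSum, Finset.mul_sum, Finset.sum_filter]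
  refine Finset.sum_congr rfl fun k _ ↦ ?_
  split_ifs with hk
  · obtain ⟨i, rfl⟩ := hk
    have hi : (2 * i + 1) / 2 = i := by omega
    simp only [eval_mul, eval_C, eval_comp, eval_X, eval_pow, eval_sub, eval_one, hi, ← hs]
    rw [Odd.neg_pow ⟨i, rfl⟩]
    ring
  · rw [(Nat.not_odd_iff_even.mp hk).neg_pow, sub_self]

lemma abs_eval_derivative_mul_sqrt_le {P : ℝ[X]} {M x : ℝ}
    (hP : ∀ x ∈ Icc (-1 : ℝ) 1, |P.eval x| ≤ M) (hx : x ∈ Icc (-1 : ℝ) 1) :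
    |(derivative P).eval x| * √(1 - x ^ 2) ≤ P.natDegree * M := by
  obtain h0 | h0 := P.natDegree.eq_zero_or_pos
  · simp [derivative_of_natDegree_zero h0, h0]
  set b := √(1 - x ^ 2)
  have hb2 : b ^ 2 = 1 - x ^ 2 := Real.sq_sqrt (by nlinarith [hx.1, hx.2])
  have hM : 0 ≤ M := (abs_nonneg _).trans (hP x hx)
  -- With `x = cos α` and `y = cos φ`, this compares `P(cos (α - φ))` and `P(cos (α + φ))`.
  set B := rotationOddPart P x b with hB
  have hodd : ∀ y ∈ Icc (-1 : ℝ) 1, |B.eval y| * √(1 - y ^ 2) ≤ M := by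
    intro y hy
    set s := √(1 - y ^ 2)
    have hs2 : s ^ 2 = 1 - y ^ 2 := Real.sq_sqrt (by nlinarith [hy.1, hy.2])
    have hrot : ∀ σ : ℝ, σ ^ 2 = s ^ 2 → |P.eval (x * y + b * σ)| ≤ M := fun σ hσ ↦ by
      refine hP _ (abs_le.mp ((sq_le_one_iff_abs_le_one _).mp ?_))
      nlinarith [sq_nonneg (x * σ - b * y)]
    have hplus := abs_le.mp (hrot s rfl)
    have hminus := abs_le.mp (hrot (-s) (neg_sq s))
    have hdiff := eval_add_sub_eval_sub_eq_rotationOddPart P x b hs2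
    rw [mul_neg, ← sub_eq_add_neg] at hminus
    have hs0 : |s| = s := abs_of_nonneg (Real.sqrt_nonneg _)
    rw [← hs0, ← abs_mul, abs_le]
    constructor <;> linarith
  have hdeg : B.natDegree + 1 ≤ P.natDegree := by
    have hB1 : B.natDegree ≤ P.natDegree - 1 := natDegree_rotationOddPart_le P x b
    omega
  calc |(derivative P).eval x| * b = |B.eval 1| := by
        rw [hB, eval_one_rotationOddPart, abs_mul, abs_of_nonneg (Real.sqrt_nonneg _), mul_comm]
    _ ≤ (B.natDegree + 1) * M := abs_eval_one_le_of_abs_eval_mul_sqrt_le hodd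
    _ ≤ P.natDegree * M := by gcongr; exact_mod_cast hdeg

lemma abs_eval_derivative_le {P : ℝ[X]} {M x : ℝ}
    (hP : ∀ x ∈ Icc (-1 : ℝ) 1, |P.eval x| ≤ M) (hx : x ∈ Icc (-1 : ℝ) 1) :
    |(derivative P).eval x| ≤ (P.natDegree : ℝ) ^ 2 * M := by
  obtain h0 | h0 := P.natDegree.eq_zero_or_pos
  · simp [derivative_of_natDegree_zero h0, h0]
  have hM : 0 ≤ M := (abs_nonneg _).trans (hP x hx)
  have hdeg : (derivative P).natDegree + 1 ≤ P.natDegree := by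
    have hder := natDegree_derivative_le P
    omega
  calc |(derivative P).eval x| ≤ ((derivative P).natDegree + 1) * (P.natDegree * M) :=
        abs_eval_le_of_abs_eval_mul_sqrt_le (fun y hy ↦ abs_eval_derivative_mul_sqrt_le hP hy) hx
    _ ≤ P.natDegree * (P.natDegree * M) := by gcongr; exact_mod_cast hdeg
    _ = (P.natDegree : ℝ) ^ 2 * M := by ring

lemma abs_eval_derivative_le_of_mem_Icc {P : ℝ[X]} {a b lo hi x : ℝ} (hab : a < b)
    (hP : ∀ x ∈ Icc a b, P.eval x ∈ Icc lo hi) (hx : x ∈ Icc a b) :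
    |(derivative P).eval x| ≤ (P.natDegree : ℝ) ^ 2 * (hi - lo) / (b - a) := by
  set m := (b - a) / 2 with hm
  have hm0 : 0 < m := by linarith
  set L : ℝ[X] := C m * X + C ((a + b) / 2) with hL
  set R : ℝ[X] := P.comp L - C ((hi + lo) / 2) with hR
  have hdeg : R.natDegree ≤ P.natDegree := by
    rw [hR, natDegree_sub_C]
    exact natDegree_comp_le_of_natDegree_le_one natDegree_linear_le
  have hbound : ∀ y ∈ Icc (-1 : ℝ) 1, |R.eval y| ≤ (hi - lo) / 2 := fun y hy ↦ by
    have hLy : L.eval y ∈ Icc a b := by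
      simp only [hL, eval_add, eval_mul, eval_C, eval_X]
      constructor <;> nlinarith [hy.1, hy.2]
    have hPy := hP _ hLy
    simp only [hR, eval_sub, eval_comp, eval_C]
    rw [abs_le]
    constructor <;> linarith [hPy.1, hPy.2]
  have hy : (x - (a + b) / 2) / m ∈ Icc (-1 : ℝ) 1 := by
    rw [mem_Icc, le_div_iff₀ hm0, div_le_iff₀ hm0]
    constructor <;> linarith [hx.1, hx.2]
  have hLx : L.eval ((x - (a + b) / 2) / m) = x := by
    simp only [hL, eval_add, eval_mul, eval_C, eval_X]
    field_simp
    ring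
  have hderiv : (derivative R).eval ((x - (a + b) / 2) / m) = m * (derivative P).eval x := by
    have hLderiv : derivative L = C m := by simp [hL]
    rw [hR, derivative_sub, derivative_C, sub_zero, derivative_comp, eval_mul, eval_comp, hLx,
      hLderiv, eval_C]
  have hosc : 0 ≤ hi - lo := by linarith [(hP x hx).1, (hP x hx).2]
  rw [le_div_iff₀ (sub_pos.mpr hab)]
  calc |(derivative P).eval x| * (b - a) = 2 * |m * (derivative P).eval x| := by
        rw [abs_mul, abs_of_pos hm0, hm]; ring
    _ ≤ 2 * ((R.natDegree : ℝ) ^ 2 * ((hi - lo) / 2)) := by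
        rw [← hderiv]; gcongr; exact abs_eval_derivative_le hbound hy
    _ ≤ 2 * ((P.natDegree : ℝ) ^ 2 * ((hi - lo) / 2)) := by gcongr
    _ = (P.natDegree : ℝ) ^ 2 * (hi - lo) := by ring

end BernsteinMarkov

section NegativeVariation

lemma sub_le_integral_negPart {f f' : ℝ → ℝ} {a b : ℝ} (hf : ∀ x, HasDerivAt f (f' x) x)
    (hf' : Continuous f') (hab : a ≤ b) : f a - f b ≤ ∫ x in a..b, (f' x)⁻ := by
  have hftc : ∫ x in a..b, -f' x = f a - f b := by
    rw [intervalIntegral.integral_neg,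
      intervalIntegral.integral_eq_sub_of_hasDerivAt (fun x _ ↦ hf x)
        (hf'.intervalIntegrable a b), neg_sub]
  rw [← hftc]
  exact intervalIntegral.integral_mono hab (hf'.neg.intervalIntegrable a b)
    ((continuous_negPart.comp hf').intervalIntegrable a b) fun x ↦ neg_le_negPart (f' x)

lemma mul_sub_le_sub_of_integral_negPart_le {f f' : ℝ → ℝ} {a b x y θ : ℝ}
    (hf : ∀ x, HasDerivAt f (f' x) x) (hf' : Continuous f') (hθ : θ < 1)
    (hx : x ∈ Icc a b) (hy : y ∈ Icc a b)
    (hmax : IsMaxOn f (Icc a b) x) (hmin : IsMinOn f (Icc a b) y)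
    (hneg : ∫ x in a..b, (f' x)⁻ ≤ θ * (f x - f y)) :
    (1 - θ) * (f x - f y) ≤ f b - f a := by
  have hab : a ≤ b := hx.1.trans hx.2
  have hyx : f y ≤ f x := hmax hy
  have hint : ∀ u v, IntervalIntegrable (fun z ↦ (f' z)⁻) MeasureTheory.volume u v :=
    (continuous_negPart.comp hf').intervalIntegrable
  obtain hxy | hxy := le_total x y
  · have hdrop := sub_le_integral_negPart hf hf' hxy
    have hmono : ∫ z in x..y, (f' z)⁻ ≤ ∫ z in a..b, (f' z)⁻ :=
      intervalIntegral.integral_mono_interval hx.1 hxy hy.2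
        (Filter.Eventually.of_forall fun z ↦ negPart_nonneg (f' z)) (hint a b)
    have hosc : f x = f y := by nlinarith
    have ha : f a ≤ f x := hmax (left_mem_Icc.mpr hab)
    have hb : f y ≤ f b := hmin (right_mem_Icc.mpr hab)
    rw [hosc, sub_self, mul_zero]
    linarith
  · have hleft := sub_le_integral_negPart hf hf' hy.1
    have hright := sub_le_integral_negPart hf hf' hx.2
    have hmid : 0 ≤ ∫ z in y..x, (f' z)⁻ :=
      intervalIntegral.integral_nonneg hxy fun z _ ↦ negPart_nonneg (f' z)
    have hsplit := intervalIntegral.integral_add_adjacent_intervals (hint a y) (hint y b)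
    have hsplit' := intervalIntegral.integral_add_adjacent_intervals (hint y x) (hint x b)
    linarith

lemma card_le_natDegree_of_pairwiseDisjoint_Ioo {ι : Type*} {g : ℝ[X]} {s : Finset ι}
    {a b : ι → ℝ} (hab : ∀ i ∈ s, a i ≤ b i) (hsign : ∀ i ∈ s, g.eval (a i) * g.eval (b i) < 0)
    (hdisj : (s : Set ι).PairwiseDisjoint fun i ↦ Ioo (a i) (b i)) :
    s.card ≤ g.natDegree := by
  classical
  have hroot : ∀ i ∈ s, ∃ z ∈ Ioo (a i) (b i), g.eval z = 0 := by
    intro i hi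
    obtain ⟨ha, hb⟩ | ⟨ha, hb⟩ := mul_neg_iff.mp (hsign i hi)
    · exact intermediate_value_Ioo' (hab i hi) g.continuousOn ⟨hb, ha⟩
    · exact intermediate_value_Ioo (hab i hi) g.continuousOn ⟨ha, hb⟩
  choose! z hz hz0 using hroot
  calc s.card ≤ g.roots.toFinset.card := by
        refine Finset.card_le_card_of_injOn z (fun i hi ↦ ?_) fun i hi j hj hij ↦ ?_
        · have hg0 : g ≠ 0 := by
            rintro rfl
            simpa using hsign i hi
          simpa [hg0] using hz0 i hi
        · by_contra hne
          exact (hdisj hi hj hne).le_bot ⟨hz i hi, hij ▸ hz j hj⟩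
    _ ≤ g.roots.card := g.roots.toFinset_card_le
    _ ≤ g.natDegree := g.card_roots'

open Classical in
/-- The indices `j < k` of the cells `[t j, t (j + 1)]` on which `f` takes a negative value. -/
noncomputable def negativeCells (f : ℝ → ℝ) (t : ℕ → ℝ) (k : ℕ) : Finset ℕ :=
  {j ∈ Finset.range k | ∃ x ∈ Icc (t j) (t (j + 1)), f x < 0}

lemma mem_negativeCells {f : ℝ → ℝ} {t : ℕ → ℝ} {k j : ℕ} :
    j ∈ negativeCells f t k ↔ j < k ∧ ∃ x ∈ Icc (t j) (t (j + 1)), f x < 0 := by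
  simp [negativeCells]

lemma pairwiseDisjoint_Ioo_succ {t : ℕ → ℝ} {k : ℕ} (ht : MonotoneOn t (Iic k)) :
    (Iio k).PairwiseDisjoint fun j ↦ Ioo (t j) (t (j + 1)) := by
  have hlt : ∀ i j, i < j → j < k → Disjoint (Ioo (t i) (t (i + 1))) (Ioo (t j) (t (j + 1))) := by
    intro i j hij hj
    rw [Ioo_disjoint_Ioo]
    exact (min_le_left _ _).trans <|
      (ht (mem_Iic.mpr (by omega)) (mem_Iic.mpr hj.le) hij).trans (le_max_right _ _)
  intro i hi j hj hij
  obtain h | h := hij.lt_or_gt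
  · exact hlt i j h hj
  · exact (hlt j i h hi).symm

lemma pairwiseDisjoint_Ioo_sumElim {ι : Type*} {a b x : ι → ℝ} {s : Set ι}
    (hs : s.PairwiseDisjoint fun i ↦ Ioo (a i) (b i)) (hx : ∀ i ∈ s, x i ∈ Icc (a i) (b i)) :
    {i : ι ⊕ ι | Sum.elim id id i ∈ s}.PairwiseDisjoint
      fun i ↦ Ioo (Sum.elim a x i) (Sum.elim x b i) := by
  have hhalves : ∀ i, Disjoint (Ioo (a i) (x i)) (Ioo (x i) (b i)) := fun i ↦
    Ioo_disjoint_Ioo.mpr ((min_le_left _ _).trans (le_max_right _ _))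
  have hsub : ∀ i : ι ⊕ ι, Sum.elim id id i ∈ s → Ioo (Sum.elim a x i) (Sum.elim x b i) ⊆
      Ioo (a (Sum.elim id id i)) (b (Sum.elim id id i)) := by
    rintro (i | i) hi
    · exact Ioo_subset_Ioo_right (hx i hi).2
    · exact Ioo_subset_Ioo_left (hx i hi).1
  intro i hi j hj hij
  by_cases hne : Sum.elim id id i = Sum.elim id id j
  · obtain i | i := i <;> obtain j | j := j <;> obtain rfl : i = j := hne
    · exact absurd rfl hij
    · exact hhalves i
    · exact (hhalves i).symm
    · exact absurd rfl hij
  · exact (hs hi hj hne).mono (hsub i hi) (hsub j hj)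

lemma negativeCells_subset_range {f : ℝ → ℝ} {t : ℕ → ℝ} {k : ℕ} :
    negativeCells f t k ⊆ Finset.range k := by
  classical
  exact Finset.filter_subset _ _

lemma two_mul_card_negativeCells_le_of_pos {g : ℝ[X]} {t : ℕ → ℝ} {k : ℕ}
    (ht : MonotoneOn t (Iic k)) (hg : ∀ j < k, 0 < g.eval (t j)) :
    2 * (negativeCells (g.eval ·) t k).card ≤ g.natDegree + 1 := by
  set cells := negativeCells (g.eval ·) t k
  have hlt : ∀ j ∈ cells, j < k := fun j hj ↦ (mem_negativeCells.mp hj).1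
  have hcell : ∀ j ∈ cells, ∃ x ∈ Icc (t j) (t (j + 1)), g.eval x < 0 := fun j hj ↦
    (mem_negativeCells.mp hj).2
  choose! x hx hneg using hcell
  -- `g` changes sign on both halves of each cell, except perhaps on the right half of the last one.
  have hcount : (cells.disjSum (cells.erase (k - 1))).card ≤ g.natDegree := by
    refine card_le_natDegree_of_pairwiseDisjoint_Ioo
      (a := Sum.elim t x) (b := Sum.elim x fun j ↦ t (j + 1)) ?_ ?_ ?_
    · rintro (j | j) hj
      · exact (hx j (Finset.inl_mem_disjSum.mp hj)).1
      · exact (hx j (Finset.mem_of_mem_erase (Finset.inr_mem_disjSum.mp hj))).2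
    · rintro (j | j) hj
      · rw [Finset.inl_mem_disjSum] at hj
        exact mul_neg_of_pos_of_neg (hg j (hlt j hj)) (hneg j hj)
      · rw [Finset.inr_mem_disjSum, Finset.mem_erase] at hj
        have hjk := hlt j hj.2
        exact mul_neg_of_neg_of_pos (hneg j hj.2) (hg (j + 1) (by omega))
    · refine (pairwiseDisjoint_Ioo_sumElim ((pairwiseDisjoint_Ioo_succ ht).subset hlt) hx).subset ?_
      rintro (j | j) hj
      · exact Finset.inl_mem_disjSum.mp hj
      · exact Finset.mem_of_mem_erase (Finset.inr_mem_disjSum.mp hj)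
  have herase := Finset.pred_card_le_card_erase (s := cells) (a := k - 1)
  rw [Finset.card_disjSum] at hcount
  omega

lemma two_mul_card_negativeCells_le {g : ℝ[X]} {t : ℕ → ℝ} {k : ℕ}
    (ht : MonotoneOn t (Iic k)) (hg : ∀ j < k, 0 ≤ g.eval (t j)) :
    2 * (negativeCells (g.eval ·) t k).card ≤ g.natDegree + 1 := by
  have hcell : ∀ j ∈ negativeCells (g.eval ·) t k, ∃ x ∈ Icc (t j) (t (j + 1)), g.eval x < 0 :=
    fun j hj ↦ (mem_negativeCells.mp hj).2
  choose! x hx hneg using hcell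
  have hsmall : ∀ᶠ η in nhdsWithin (0 : ℝ) (Ioi 0),
      ∀ j ∈ negativeCells (g.eval ·) t k, g.eval (x j) + η < 0 := by
    rw [Filter.eventually_all_finset]
    refine fun j hj ↦ nhdsWithin_le_nhds ?_
    filter_upwards [Iio_mem_nhds (neg_pos.mpr (hneg j hj))] with η hη
    linarith [mem_Iio.mp hη]
  obtain ⟨η, hη, hη0 : 0 < η⟩ := (hsmall.and self_mem_nhdsWithin).exists
  have hpos : ∀ j < k, 0 < (g + C η).eval (t j) := fun j hj ↦ by
    simpa using add_pos_of_nonneg_of_pos (hg j hj) hη0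
  have hsub : negativeCells (g.eval ·) t k ⊆ negativeCells ((g + C η).eval ·) t k := fun j hj ↦
    mem_negativeCells.mpr ⟨(mem_negativeCells.mp hj).1, x j, hx j hj, by simpa using hη j hj⟩
  calc 2 * (negativeCells (g.eval ·) t k).card
      ≤ 2 * (negativeCells ((g + C η).eval ·) t k).card := by gcongr
    _ ≤ (g + C η).natDegree + 1 := two_mul_card_negativeCells_le_of_pos ht hpos
    _ = g.natDegree + 1 := by rw [natDegree_add_C]

lemma integral_negPart_le_card_mul {f : ℝ → ℝ} {t : ℕ → ℝ} {k : ℕ} {M K : ℝ}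
    (hf : Continuous f) (ht : MonotoneOn t (Iic k)) (hgap : ∀ j < k, t (j + 1) - t j ≤ K)
    (hM : ∀ x ∈ Icc (t 0) (t k), |f x| ≤ M) :
    ∫ x in t 0..t k, (f x)⁻ ≤ (negativeCells f t k).card * (M * K) := by
  have hint : ∀ u v, IntervalIntegrable (fun x ↦ (f x)⁻) MeasureTheory.volume u v :=
    (continuous_negPart.comp hf).intervalIntegrable
  have hle : ∀ j < k, t j ≤ t (j + 1) := fun j hj ↦
    ht (mem_Iic.mpr hj.le) (mem_Iic.mpr hj) j.le_succ
  have hgood : ∀ j ∈ Finset.range k, j ∉ negativeCells f t k →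
      ∫ x in t j..t (j + 1), (f x)⁻ = 0 := by
    intro j hj hjneg
    rw [Finset.mem_range] at hj
    refine intervalIntegral.integral_zero_ae (Filter.Eventually.of_forall fun x hx ↦ ?_)
    rw [uIoc_of_le (hle j hj)] at hx
    refine negPart_eq_zero.mpr (not_lt.mp fun hxneg ↦ hjneg ?_)
    exact mem_negativeCells.mpr ⟨hj, x, Ioc_subset_Icc_self hx, hxneg⟩
  have hbad : ∀ j ∈ negativeCells f t k, ∫ x in t j..t (j + 1), (f x)⁻ ≤ M * K := by
    intro j hj
    have hjk := (mem_negativeCells.mp hj).1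
    have hsub : Icc (t j) (t (j + 1)) ⊆ Icc (t 0) (t k) :=
      Icc_subset_Icc (ht (mem_Iic.mpr k.zero_le) (mem_Iic.mpr hjk.le) j.zero_le)
        (ht (mem_Iic.mpr hjk) self_mem_Iic hjk)
    have hM0 : 0 ≤ M := (abs_nonneg _).trans (hM _ (hsub (left_mem_Icc.mpr (hle j hjk))))
    calc ∫ x in t j..t (j + 1), (f x)⁻ ≤ ∫ _ in t j..t (j + 1), M :=
          intervalIntegral.integral_mono_on (hle j hjk) (hint _ _)
            intervalIntegrable_const fun x hx ↦ by
              rw [negPart_def]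
              exact sup_le ((neg_le_abs _).trans (hM x (hsub hx))) hM0
      _ = (t (j + 1) - t j) * M := by rw [intervalIntegral.integral_const, smul_eq_mul]
      _ ≤ M * K := by rw [mul_comm]; gcongr; exact hgap j hjk
  calc ∫ x in t 0..t k, (f x)⁻ = ∑ j ∈ Finset.range k, ∫ x in t j..t (j + 1), (f x)⁻ :=
        (intervalIntegral.sum_integral_adjacent_intervals fun j _ ↦ hint _ _).symm
    _ = ∑ j ∈ negativeCells f t k, ∫ x in t j..t (j + 1), (f x)⁻ :=
        (Finset.sum_subset negativeCells_subset_range hgood).symm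
    _ ≤ (negativeCells f t k).card * (M * K) := by
        rw [← nsmul_eq_mul]
        exact Finset.sum_le_card_nsmul _ _ _ hbad

lemma integral_negPart_eval_derivative_le {q : ℝ[X]} {t : ℕ → ℝ} {k : ℕ} {K lo hi : ℝ}
    (ht : MonotoneOn t (Iic k)) (htk : t 0 < t k) (hgap : ∀ j < k, t (j + 1) - t j ≤ K)
    (hder : ∀ j < k, 0 ≤ (derivative q).eval (t j))
    (hq : ∀ x ∈ Icc (t 0) (t k), q.eval x ∈ Icc lo hi) :
    ∫ x in t 0..t k, ((derivative q).eval x)⁻ ≤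
      (q.natDegree : ℝ) ^ 3 * K / (2 * (t k - t 0)) * (hi - lo) := by
  set M := (q.natDegree : ℝ) ^ 2 * (hi - lo) / (t k - t 0)
  have hlohi : lo ≤ hi := nonempty_Icc.mp ⟨_, hq (t 0) (left_mem_Icc.mpr htk.le)⟩
  have hM : 0 ≤ M := div_nonneg (mul_nonneg (sq_nonneg _) (sub_nonneg.mpr hlohi)) (by linarith)
  have hK : 0 ≤ K := by
    have hk : 0 < k := Nat.pos_of_ne_zero fun h ↦ by simp [h] at htk
    exact (sub_nonneg.mpr (ht (mem_Iic.mpr hk.le) (mem_Iic.mpr hk) zero_le_one)).trans (hgap 0 hk)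
  have hcard : 2 * (negativeCells ((derivative q).eval ·) t k).card ≤ q.natDegree := by
    obtain h0 | h0 := q.natDegree.eq_zero_or_pos
    · simp [derivative_of_natDegree_zero h0, negativeCells]
    · have hcells := two_mul_card_negativeCells_le ht hder
      have hdeg := natDegree_derivative_le q
      omega
  have hcard' : ((negativeCells ((derivative q).eval ·) t k).card : ℝ) ≤ q.natDegree / 2 := by
    rw [le_div_iff₀ two_pos, mul_comm]
    exact_mod_cast hcard
  calc ∫ x in t 0..t k, ((derivative q).eval x)⁻
      ≤ (negativeCells ((derivative q).eval ·) t k).card * (M * K) :=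
        integral_negPart_le_card_mul (derivative q).continuous ht hgap fun x hx ↦
          abs_eval_derivative_le_of_mem_Icc htk hq hx
    _ ≤ q.natDegree / 2 * (M * K) := mul_le_mul_of_nonneg_right hcard' (mul_nonneg hM hK)
    _ = _ := by
        have hlen : t k - t 0 ≠ 0 := (sub_pos.mpr htk).ne'
        simp only [M]
        field_simp

lemma exists_le_add_and_add_mul_le {q : ℝ[X]} {t : ℕ → ℝ} {k : ℕ} {K θ : ℝ}
    (ht : MonotoneOn t (Iic k)) (htk : t 0 < t k) (hgap : ∀ j < k, t (j + 1) - t j ≤ K)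
    (hder : ∀ j < k, 0 ≤ (derivative q).eval (t j))
    (hθ : (q.natDegree : ℝ) ^ 3 * K / (2 * (t k - t 0)) ≤ θ) (hθ1 : θ < 1) :
    ∃ D, (∀ x ∈ Icc (t 0) (t k), q.eval x ≤ q.eval (t 0) + D) ∧
      q.eval (t 0) + (1 - θ) * D ≤ q.eval (t k) := by
  have hne : (Icc (t 0) (t k)).Nonempty := nonempty_Icc.mpr htk.le
  obtain ⟨x, hx, hmax⟩ := isCompact_Icc.exists_isMaxOn hne q.continuousOn
  obtain ⟨y, hy, hmin⟩ := isCompact_Icc.exists_isMinOn hne q.continuousOn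
  have hyx : q.eval y ≤ q.eval x := hmax hy
  have hneg := integral_negPart_eval_derivative_le ht htk hgap hder fun z hz ↦ ⟨hmin hz, hmax hz⟩
  have hgrowth := mul_sub_le_sub_of_integral_negPart_le q.hasDerivAt
    (derivative q).continuous hθ1 hx hy hmax hmin
    (hneg.trans (mul_le_mul_of_nonneg_right hθ (sub_nonneg.mpr hyx)))
  refine ⟨q.eval x - q.eval y, fun z hz ↦ ?_, by linarith⟩
  have hy0 : q.eval y ≤ q.eval (t 0) := hmin (left_mem_Icc.mpr htk.le)
  have hz' : q.eval z ≤ q.eval x := hmax hz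
  linarith

lemma mul_sum_eval_le_eval {q : ℝ[X]} {t : ℕ → ℝ} {k : ℕ} {K θ : ℝ}
    (ht : MonotoneOn t (Iic k)) (htk : t 0 < t k) (hgap : ∀ j < k, t (j + 1) - t j ≤ K)
    (h0 : 0 ≤ q.eval (t 0)) (hder : ∀ j < k, 0 ≤ (derivative q).eval (t j))
    (hθ : (q.natDegree : ℝ) ^ 3 * K / (2 * (t k - t 0)) ≤ θ) (hθ0 : 0 ≤ θ) (hθ1 : θ < 1) :
    (1 - θ) / k * ∑ j ∈ Finset.range k, q.eval (t j) ≤ q.eval (t k) := by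
  have hk : (k : ℝ) ≠ 0 := Nat.cast_ne_zero.mpr fun hk ↦ by simp [hk] at htk
  obtain ⟨D, hle, hend⟩ := exists_le_add_and_add_mul_le ht htk hgap hder hθ hθ1
  have hgrid : ∀ j ∈ Finset.range k, q.eval (t j) ≤ q.eval (t 0) + D := fun j hj ↦ by
    have hjk := (Finset.mem_range.mp hj).le
    exact hle _ ⟨ht k.zero_le hjk j.zero_le, ht hjk self_mem_Iic hjk⟩
  have hsum : ∑ j ∈ Finset.range k, q.eval (t j) ≤ k * (q.eval (t 0) + D) := by
    have h := Finset.sum_le_card_nsmul _ _ _ hgrid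
    rwa [Finset.card_range, nsmul_eq_mul] at h
  calc (1 - θ) / k * ∑ j ∈ Finset.range k, q.eval (t j)
      ≤ (1 - θ) / k * (k * (q.eval (t 0) + D)) :=
        mul_le_mul_of_nonneg_left hsum (div_nonneg (sub_nonneg.mpr hθ1.le) k.cast_nonneg)
    _ = q.eval (t 0) + (1 - θ) * D - θ * q.eval (t 0) := by field_simp; ring
    _ ≤ q.eval (t 0) + (1 - θ) * D := sub_le_self _ (mul_nonneg hθ0 h0)
    _ ≤ q.eval (t k) := hend

end NegativeVariation

section Farkas

lemma exists_nonneg_sum_insert_eq {𝕜 V ι : Type*} [Semiring 𝕜] [PartialOrder 𝕜]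
    [AddCommMonoid V] [Module 𝕜 V] [DecidableEq ι] {s : Finset ι} {j : ι} (hj : j ∉ s) (a : ι → V)
    {b : 𝕜} {c : ι → 𝕜} (hb : 0 ≤ b) (hc : ∀ i, 0 ≤ c i) :
    ∃ d : ι → 𝕜, (∀ i, 0 ≤ d i) ∧ ∑ i ∈ insert j s, d i • a i = b • a j + ∑ i ∈ s, c i • a i := by
  refine ⟨Function.update c j b, fun i ↦ ?_, ?_⟩
  · obtain rfl | hij := eq_or_ne i j <;> simp [*]
  · rw [Finset.sum_insert hj, Function.update_self]
    congr 1
    exact Finset.sum_congr rfl fun i hi ↦ by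
      rw [Function.update_of_ne (ne_of_mem_of_not_mem hi hj)]

theorem exists_nonneg_eq_sum_smul_of_forall_nonneg {𝕜 V ι : Type*} [Field 𝕜] [LinearOrder 𝕜]
    [IsStrictOrderedRing 𝕜] [AddCommGroup V] [Module 𝕜 V] (s : Finset ι)
    (a : ι → Module.Dual 𝕜 V) (v : Module.Dual 𝕜 V)
    (h : ∀ x, (∀ i ∈ s, 0 ≤ a i x) → 0 ≤ v x) :
    ∃ c : ι → 𝕜, (∀ i, 0 ≤ c i) ∧ v = ∑ i ∈ s, c i • a i := by
  classical
  induction s using Finset.induction_on generalizing a v with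
  | empty =>
    refine ⟨0, fun _ ↦ le_rfl, LinearMap.ext fun x ↦ le_antisymm ?_ (h x (by simp))⟩
    simpa using h (-x) (by simp)
  | insert j s hj ih =>
    suffices ∃ (b : 𝕜) (c : ι → 𝕜), 0 ≤ b ∧ (∀ i, 0 ≤ c i) ∧ v = b • a j + ∑ i ∈ s, c i • a i by
      obtain ⟨b, c, hb, hc, hv⟩ := this
      obtain ⟨d, hd, hsum⟩ := exists_nonneg_sum_insert_eq hj a hb hc
      exact ⟨d, hd, hv.trans hsum.symm⟩
    by_cases hs : ∀ x, (∀ i ∈ s, 0 ≤ a i x) → 0 ≤ v x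
    · obtain ⟨c, hc, hv⟩ := ih a v hs
      exact ⟨0, c, le_rfl, hc, by rw [zero_smul, zero_add, hv]⟩
    push Not at hs
    obtain ⟨z, hz, hvz⟩ := hs
    have hjz : a j z < 0 := by
      by_contra! hjz
      exact hvz.not_ge (h z ((Finset.forall_mem_insert _ _ _).mpr ⟨hjz, hz⟩))
    -- Precompose every functional with the projection along `z` onto the kernel of `a j`.
    let proj (f : Module.Dual 𝕜 V) : Module.Dual 𝕜 V := f - (f z / a j z) • a j
    have hproj : ∀ f x, proj f x = f (x - (a j x / a j z) • z) := fun f x ↦ by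
      simp only [proj, LinearMap.sub_apply, LinearMap.smul_apply, map_sub, map_smul, smul_eq_mul]
      ring
    obtain ⟨c, hc, hv⟩ := ih (fun i ↦ proj (a i)) (proj v) fun x hx ↦ by
      rw [hproj]
      refine h _ ((Finset.forall_mem_insert _ _ _).mpr ⟨?_, fun i hi ↦ hproj (a i) x ▸ hx i hi⟩)
      simp [hjz.ne]
    refine ⟨(v z - ∑ i ∈ s, c i * a i z) / a j z, c, div_nonneg_of_nonpos ?_ hjz.le, hc, ?_⟩
    · exact sub_nonpos.mpr (hvz.le.trans
        (Finset.sum_nonneg fun i hi ↦ mul_nonneg (hc i) (hz i hi)))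
    · have hsum : ∑ i ∈ s, c i • proj (a i) =
          ∑ i ∈ s, c i • a i - ((∑ i ∈ s, c i * a i z) / a j z) • a j := by
        simp only [proj, smul_sub, Finset.sum_sub_distrib, smul_smul, ← mul_div_assoc,
          Finset.sum_div, Finset.sum_smul]
      rw [hsum, sub_eq_iff_eq_add] at hv
      refine hv.trans ?_
      module

end Farkas

section OrderConditions

lemma exists_quadrature_weights {t : ℕ → ℝ} {k p : ℕ} {ε : ℝ}
    (h : ∀ q : ℝ[X], q.natDegree ≤ p → (∀ j < k, 0 ≤ q.eval (t j)) →
      (∀ j < k, 0 ≤ (derivative q).eval (t j)) →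
      ε * ∑ j ∈ Finset.range k, q.eval (t j) ≤ q.eval (t k)) :
    ∃ α β : ℕ → ℝ, (∀ j, ε ≤ α j) ∧ (∀ j, 0 ≤ β j) ∧ ∀ q : ℝ[X], q.natDegree ≤ p →
      ∑ j ∈ Finset.range k, (α j * q.eval (t j) + β j * (derivative q).eval (t j)) =
        q.eval (t k) := by
  let value (x : ℝ) : Module.Dual ℝ (degreeLE ℝ p) := leval x ∘ₗ (degreeLE ℝ p).subtype
  let slope (x : ℝ) : Module.Dual ℝ (degreeLE ℝ p) :=
    leval x ∘ₗ derivative ∘ₗ (degreeLE ℝ p).subtype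
  obtain ⟨c, hc, hv⟩ := exists_nonneg_eq_sum_smul_of_forall_nonneg
    ((Finset.range k).disjSum (Finset.range k))
    (Sum.elim (fun j ↦ value (t j)) fun j ↦ slope (t j))
    (value (t k) - ε • ∑ j ∈ Finset.range k, value (t j)) fun q hq ↦ by
      have hdeg : (q : ℝ[X]).natDegree ≤ p := natDegree_le_iff_degree_le.mpr (mem_degreeLE.mp q.2)
      have hq0 := h q hdeg
        (fun j hj ↦ hq (.inl j) (Finset.inl_mem_disjSum.mpr (Finset.mem_range.mpr hj)))
        (fun j hj ↦ hq (.inr j) (Finset.inr_mem_disjSum.mpr (Finset.mem_range.mpr hj)))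
      simpa [value] using hq0
  refine ⟨fun j ↦ ε + c (.inl j), fun j ↦ c (.inr j), fun j ↦ by simp [hc], fun j ↦ hc _,
    fun q hq ↦ ?_⟩
  have hq' := LinearMap.congr_fun hv ⟨q, mem_degreeLE.mpr (natDegree_le_iff_degree_le.mp hq)⟩
  simp only [value, slope, LinearMap.sub_apply, LinearMap.add_apply, LinearMap.smul_apply,
    LinearMap.coe_smul, Pi.smul_apply, LinearMap.coe_sum, Finset.sum_apply, Finset.sum_disjSum,
    Sum.elim_inl, Sum.elim_inr, LinearMap.coe_comp, Function.comp_apply, Submodule.coe_subtype,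
    leval_apply, smul_eq_mul] at hq'
  simp only [add_mul, Finset.sum_add_distrib, ← Finset.mul_sum]
  linarith

lemma exists_orderCond_of_forall_eval_le {ω : ℕ → ℝ} {k p : ℕ} {ε : ℝ} (hε : 0 < ε)
    (h : ∀ q : ℝ[X], q.natDegree ≤ p → (∀ j < k, 0 ≤ q.eval (OmegaSum ω j)) →
      (∀ j < k, 0 ≤ (derivative q).eval (OmegaSum ω j)) →
      ε * ∑ j ∈ Finset.range k, q.eval (OmegaSum ω j) ≤ q.eval (OmegaSum ω k)) :
    ∃ r : ℝ, 0 < r ∧ ∃ δ β : ℕ → ℝ,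
      (∀ j < k, 0 ≤ δ j) ∧ (∀ j < k, 0 ≤ β j) ∧ OrderCond k p ω r δ β := by
  obtain ⟨α, β, hα, hβ, hq⟩ := exists_quadrature_weights h
  set B := 1 + ∑ j ∈ Finset.range k, β j
  have hβB : ∀ j < k, β j ≤ B := fun j hj ↦ by
    have hle := Finset.single_le_sum (fun i _ ↦ hβ i) (Finset.mem_range.mpr hj)
    linarith
  have hB : 0 < B := add_pos_of_pos_of_nonneg one_pos (Finset.sum_nonneg fun j _ ↦ hβ j)
  refine ⟨ε / B, div_pos hε hB, fun j ↦ α j - ε / B * β j, β, fun j hj ↦ ?_, fun j _ ↦ hβ j,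
    ?_, fun m _ hmp ↦ ?_⟩
  · calc (0 : ℝ) ≤ ε - ε / B * B := by rw [div_mul_cancel₀ _ hB.ne', sub_self]
      _ ≤ α j - ε / B * β j := by gcongr; exacts [hα j, hβB j hj]
  · simpa using hq 1 (by simp)
  · have hX := hq (X ^ m) (by simpa using hmp)
    simp only [derivative_X_pow, eval_mul, eval_pow, eval_X, eval_C] at hX
    rw [← hX]
    exact Finset.sum_congr rfl fun j _ ↦ by push_cast; ring

lemma OmegaSum_zero (ω : ℕ → ℝ) : OmegaSum ω 0 = 0 := Finset.sum_range_zero _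

lemma OmegaSum_succ (ω : ℕ → ℝ) (j : ℕ) : OmegaSum ω (j + 1) = OmegaSum ω j + ω (j + 1) :=
  Finset.sum_range_succ _ _

lemma monotoneOn_OmegaSum {ω : ℕ → ℝ} {k : ℕ} (hω : ∀ i, 1 ≤ i → i ≤ k → 0 ≤ ω i) :
    MonotoneOn (OmegaSum ω) (Iic k) := by
  intro i _ j hj hij
  refine Finset.sum_le_sum_of_subset_of_nonneg (by simpa using hij) fun l hl _ ↦ ?_
  have hlj := Finset.mem_range.mp hl
  exact hω _ l.succ_pos (Nat.succ_le_of_lt (hlj.trans_le hj))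

lemma nsmul_le_OmegaSum {ω : ℕ → ℝ} {k : ℕ} {m : ℝ} (hω : ∀ i, 1 ≤ i → i ≤ k → m ≤ ω i) :
    k • m ≤ OmegaSum ω k := by
  have h := Finset.card_nsmul_le_sum (Finset.range k) (fun i ↦ ω (i + 1)) m fun i hi ↦
    hω _ i.succ_pos (Nat.succ_le_of_lt (Finset.mem_range.mp hi))
  rwa [Finset.card_range] at h

end OrderConditions

theorem high_order_formula_exists_general (K : ℝ) (p k : ℕ) (hkpos : 1 ≤ k) (ω : ℕ → ℝ)
    (hω : ∀ i, 1 ≤ i → i ≤ k → 0 ≤ ω i ∧ ω i ≤ K)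
    (hk : (p : ℝ) ^ 3 * K / 2 < OmegaSum ω k) :
    ∃ r : ℝ, 0 < r ∧ ∃ δ β : ℕ → ℝ,
      (∀ j < k, 0 ≤ δ j) ∧ (∀ j < k, 0 ≤ β j) ∧ OrderCond k p ω r δ β := by
  have hmono := monotoneOn_OmegaSum fun i h1 hik ↦ (hω i h1 hik).1
  have hgap : ∀ j < k, OmegaSum ω (j + 1) - OmegaSum ω j ≤ K := fun j hj ↦ by
    rw [OmegaSum_succ, add_sub_cancel_left]
    exact (hω _ j.succ_pos hj).2
  have hK : 0 ≤ K := (hω 1 le_rfl hkpos).1.trans (hω 1 le_rfl hkpos).2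
  have hΩ : 0 < OmegaSum ω k := lt_of_le_of_lt (by positivity) hk
  set θ := (p : ℝ) ^ 3 * K / (2 * OmegaSum ω k) with hθ
  have hθ0 : 0 ≤ θ := by positivity
  have hθ1 : θ < 1 := by
    rw [hθ, div_lt_one (by positivity)]
    linarith
  refine exists_orderCond_of_forall_eval_le (ε := (1 - θ) / k)
    (div_pos (sub_pos.mpr hθ1) (Nat.cast_pos.mpr hkpos)) fun q hqp hval hder ↦ ?_
  refine mul_sum_eval_le_eval hmono ((OmegaSum_zero ω).trans_lt hΩ) hgap (hval 0 hkpos) hder ?_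
    hθ0 hθ1
  rw [OmegaSum_zero, sub_zero, hθ]
  gcongr

/-- **Existence of formulae of arbitrarily high order.**  If the step-size ratios are
bounded as `1/K₁ ≤ ω_j ≤ K₂` and `k > p³K₁K₂/2`, then there exists a `k`-step formula
of order `p` with positive SSP coefficient. -/
theorem high_order_formula_exists
    (K₁ K₂ : ℝ) (hK₁ : 1 ≤ K₁) (hK₂ : 1 ≤ K₂)
    (p k : ℕ) (hp : 1 ≤ p) (hkpos : 1 ≤ k)
    (hk : (p : ℝ) ^ 3 * K₁ * K₂ / 2 < (k : ℝ))
    (ω : ℕ → ℝ) (hω : ∀ i, 1 ≤ i → i ≤ k → 1 / K₁ ≤ ω i ∧ ω i ≤ K₂) :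
    ∃ r : ℝ, 0 < r ∧ ∃ δ β : ℕ → ℝ,
      (∀ j < k, 0 ≤ δ j) ∧ (∀ j < k, 0 ≤ β j) ∧ OrderCond k p ω r δ β := by
  have hK₁0 : 0 < K₁ := by linarith
  refine high_order_formula_exists_general K₂ p k hkpos ω
    (fun i h1 hik ↦ ⟨(one_div_pos.mpr hK₁0).le.trans (hω i h1 hik).1, (hω i h1 hik).2⟩)
    (lt_of_lt_of_le ?_ (nsmul_le_OmegaSum fun i h1 hik ↦ (hω i h1 hik).1))
  rw [nsmul_eq_mul, mul_one_div, lt_div_iff₀ hK₁0]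
  linarith
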